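/- Let f : V' → V be a homomorphism of abelian groups whose cokernel is killed by a positive integer n₁. Suppose V' decomposes as an internal direct sum V' = D' ⊕ T', where D' is a divisible subgroup and T' is killed by a positive integer n₂. Then V decomposes as an internal direct sum V = D ⊕ T, where D = f(D') is a divisible subgroup of V and T is a subgroup killed by n₁·n₂. (This is the core of the paper's proof that V(C/k) = D ⊕ T with D divisible and T of finite exponent, for a geometrically irreducible projective integral curve C over a local field.) -/

import Mathlib

/-- Let `f : V' → V` be a homomorphism of abelian groups whose cokernel is
killed by a positive integer `n₁`. Suppose `V' = D' ⊕ T'` (an internal direct sum) with `D'`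
a divisible subgroup and `T'` killed by a positive integer `n₂`. Then `V = D ⊕ T` (an internal
direct sum), where `D = f(D')` is a divisible subgroup of `V` and `T` is a subgroup killed by
`n₁·n₂`. -/
theorem stmt_6 {V' V : Type*} [AddCommGroup V'] [AddCommGroup V]
    (f : V' →+ V) (n₁ n₂ : ℕ) (hn₁ : 0 < n₁) (hn₂ : 0 < n₂)
    (hcoker : ∀ v : V, n₁ • v ∈ f.range)
    (D' T' : AddSubgroup V')
    (hint : D' ⊓ T' = ⊥) (hsum : D' ⊔ T' = ⊤)
    (hdiv : ∀ d ∈ D', ∀ n : ℕ, 0 < n → ∃ e ∈ D', n • e = d)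
    (hT' : ∀ t ∈ T', n₂ • t = 0) :
    -- `D = f(D')` is divisible:
    (∀ d ∈ D'.map f, ∀ n : ℕ, 0 < n → ∃ e ∈ D'.map f, n • e = d) ∧
    -- and it admits a complement `T` killed by `n₁·n₂`:
    ∃ T : AddSubgroup V, D'.map f ⊓ T = ⊥ ∧ D'.map f ⊔ T = ⊤ ∧
      ∀ t ∈ T, (n₁ * n₂) • t = 0 := by
  have hD : ∀ d ∈ D'.map f, ∀ n : ℕ, 0 < n → ∃ e ∈ D'.map f, n • e = d := by
    rintro _ ⟨d, hd, rfl⟩ n hn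
    obtain ⟨e, he, rfl⟩ := hdiv d hd n hn
    exact ⟨f e, ⟨e, he, rfl⟩, (map_nsmul f n e).symm⟩
  refine ⟨hD, ?_⟩
  have hsurj : ∀ {n : ℕ}, n ≠ 0 → Function.Surjective (fun a : D'.map f => n • a) := by
    rintro n hn ⟨d, hd⟩
    obtain ⟨e, he, h⟩ := hD d hd n (Nat.pos_of_ne_zero hn)
    exact ⟨⟨e, he⟩, Subtype.ext h⟩
  letI : DivisibleBy (D'.map f) ℕ := divisibleByOfSMulRightSurj _ _ hsurj
  letI : DivisibleBy (D'.map f) ℤ := AddGroup.divisibleByIntOfDivisibleByNat _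
  obtain ⟨r, hr⟩ := (Module.Baer.of_divisible (D'.map f)).extension_property_addMonoidHom
    (D'.map f).subtype Subtype.val_injective (AddMonoidHom.id _)
  have hr' : ∀ (x : V) (hx : x ∈ D'.map f), r x = ⟨x, hx⟩ := fun x hx =>
    DFunLike.congr_fun hr ⟨x, hx⟩
  have hbot : ∀ x ∈ D'.map f, r x = 0 → x = 0 := by
    intro x hx h0
    rw [hr' x hx] at h0
    exact congrArg Subtype.val h0
  refine ⟨r.ker, ?_, ?_, ?_⟩
  · rw [eq_bot_iff]
    rintro x ⟨hx, hx'⟩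
    exact hbot x hx hx'
  · rw [eq_top_iff]
    intro x _
    refine AddSubgroup.mem_sup.2 ⟨r x, (r x).2, x - r x, ?_, by abel⟩
    rw [AddMonoidHom.mem_ker, map_sub, hr' _ (r x).2, sub_self]
  · intro t ht
    rw [AddMonoidHom.mem_ker] at ht
    apply hbot
    · obtain ⟨v, hv⟩ := hcoker t
      have hm : v ∈ D' ⊔ T' := hsum ▸ AddSubgroup.mem_top v
      obtain ⟨d, hd, s, hs, rfl⟩ := AddSubgroup.mem_sup.1 hm
      refine ⟨n₂ • d, D'.nsmul_mem hd n₂, ?_⟩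
      rw [mul_comm, mul_smul, ← hv, ← map_nsmul, smul_add, hT' s hs, add_zero]
    · rw [map_nsmul, ht, smul_zero]
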